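/- arXiv:2404.15843 — 2 statements merged into one kernel-verified Lean document; each statement's English description precedes it below -/
import Mathlib

section
/- Let H ⊆ 𝕋 be a hypothesis and suppose the true parameter Θ belongs to H. Then the test that rejects the hypothesis 'Θ ∈ H' when Π̄_{x^n}(H) ≤ α controls the frequentist Type I error rate at level α: P_Θ^n{ x^n : Π̄_{x^n}(H) ≤ α } ≤ α for every α ∈ [0,1]. -/
open MeasureTheory

/-- Likelihood of an iid sample: `L_{x^n}(θ) = ∏ᵢ p_θ(xᵢ)`. -/
noncomputable def likelihood {𝕏 𝕋 : Type*} (p : 𝕋 → 𝕏 → ℝ) {n : ℕ}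
    (xn : Fin n → 𝕏) (θ : 𝕋) : ℝ :=
  ∏ i, p θ (xn i)

/-- Relative likelihood: `R(x^n, θ) = L_{x^n}(θ) / sup_ϑ L_{x^n}(ϑ)`. -/
noncomputable def relLik {𝕏 𝕋 : Type*} (p : 𝕋 → 𝕏 → ℝ) {n : ℕ}
    (xn : Fin n → 𝕏) (θ : 𝕋) : ℝ :=
  likelihood p xn θ / ⨆ ϑ, likelihood p xn ϑ

/-- Possibilistic IM contour: `π_{x^n}(θ) = P_θ^n{ R(X^n, θ) ≤ R(x^n, θ) }`. -/
noncomputable def contour {𝕏 𝕋 : Type*} [MeasurableSpace 𝕏]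
    (P : 𝕋 → Measure 𝕏) (p : 𝕋 → 𝕏 → ℝ) {n : ℕ}
    (xn : Fin n → 𝕏) (θ : 𝕋) : ℝ :=
  ((Measure.pi fun _ : Fin n => P θ) {y | relLik p y θ ≤ relLik p xn θ}).toReal

/-- Possibility measure: `Π̄_{x^n}(H) = sup_{θ ∈ H} π_{x^n}(θ)`. -/
noncomputable def upperProb {𝕏 𝕋 : Type*} [MeasurableSpace 𝕏]
    (P : 𝕋 → Measure 𝕏) (p : 𝕋 → 𝕏 → ℝ) {n : ℕ}
    (xn : Fin n → 𝕏) (H : Set 𝕋) : ℝ :=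
  ⨆ θ ∈ H, contour P p xn θ

section SublevelMeasure

variable {Ω β : Type*} [MeasurableSpace Ω] [LinearOrder β] [TopologicalSpace β]
  [ClosedIciTopology β] [SecondCountableTopology β]

theorem measure_preimage_biUnion_Iio (ν : Measure Ω) (R : Ω → β) (s : Set β) :
    ν (R ⁻¹' ⋃ b ∈ s, Set.Iio b) = ⨆ b ∈ s, ν (R ⁻¹' Set.Iio b) := by
  refine le_antisymm ?_
    (iSup₂_le fun b hb => measure_mono (Set.preimage_mono (Set.subset_biUnion_of_mem hb)))
  obtain ⟨t, hts, ht, hUnion⟩ :=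
    TopologicalSpace.isOpen_biUnion_countable s Set.Iio fun _ _ => isOpen_Iio
  have hmono : Monotone fun b => R ⁻¹' Set.Iio b :=
    fun _ _ hab => Set.preimage_mono (Set.Iio_subset_Iio hab)
  have hdir : DirectedOn (Function.onFun (· ⊆ ·) fun b => R ⁻¹' Set.Iio b) t :=
    fun a ha b hb => ⟨max a b, max_rec' (· ∈ t) ha hb, hmono (le_max_left a b),
      hmono (le_max_right a b)⟩
  rw [← hUnion, Set.preimage_iUnion₂, measure_biUnion_eq_iSup ht hdir]
  exact biSup_mono hts

theorem measure_setOf_measure_sublevel_le (ν : Measure Ω) (R : Ω → β) (c : ENNReal) :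
    ν {x | ν {y | R y ≤ R x} ≤ c} ≤ c := by
  set A : Set Ω := {x | ν {y | R y ≤ R x} ≤ c}
  -- Sublevel events at points of `A` have measure at most `c`: if `R` attains its maximum on `A`,
  -- one of them contains `A`; otherwise the strict ones cover `A` and form a chain.
  by_cases hmax : ∃ x ∈ A, ∀ z ∈ A, R z ≤ R x
  · obtain ⟨x, hxA, hx⟩ := hmax
    exact (measure_mono hx).trans hxA
  · push Not at hmax
    have hcover : A ⊆ R ⁻¹' ⋃ b ∈ R '' A, Set.Iio b := fun x hxA => by
      simpa using hmax x hxA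
    calc ν A ≤ ν (R ⁻¹' ⋃ b ∈ R '' A, Set.Iio b) := measure_mono hcover
      _ = ⨆ b ∈ R '' A, ν (R ⁻¹' Set.Iio b) := measure_preimage_biUnion_Iio ν R _
      _ ≤ c := by
        refine iSup₂_le ?_
        rintro _ ⟨z, hzA, rfl⟩
        exact (measure_mono fun _ hy => le_of_lt hy).trans hzA

theorem measure_setOf_measureReal_sublevel_le (ν : Measure Ω) [IsFiniteMeasure ν] (R : Ω → β)
    (α : ℝ) : ν {x | ν.real {y | R y ≤ R x} ≤ α} ≤ ENNReal.ofReal α := by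
  have hsub : {x | ν.real {y | R y ≤ R x} ≤ α} ⊆
      {x | ν {y | R y ≤ R x} ≤ ENNReal.ofReal α} := fun x hx =>
    calc ν {y | R y ≤ R x} = ENNReal.ofReal (ν.real {y | R y ≤ R x}) := by
          rw [ofReal_measureReal]
      _ ≤ ENNReal.ofReal α := ENNReal.ofReal_le_ofReal hx
  exact (measure_mono hsub).trans (measure_setOf_measure_sublevel_le ν R _)

theorem im_test_typeI_error_general {𝕋 : Type*} (P : 𝕋 → Measure Ω)
    [∀ θ, IsProbabilityMeasure (P θ)] (R : Ω → 𝕋 → β) {H : Set 𝕋} {Θ : 𝕋} (hΘH : Θ ∈ H)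
    (α : ℝ) :
    P Θ {x | (⨆ θ ∈ H, (P θ).real {y | R y θ ≤ R x θ}) ≤ α} ≤ ENNReal.ofReal α := by
  refine (measure_mono fun x hx => ?_).trans
    (measure_setOf_measureReal_sublevel_le (P Θ) (fun y => R y Θ) α)
  have hbdd : BddAbove (⋃ θ, Set.range fun _ : θ ∈ H => (P θ).real {y | R y θ ≤ R x θ}) := by
    refine ⟨1, fun r hr => ?_⟩
    obtain ⟨θ, _, rfl⟩ := Set.mem_iUnion.1 hr
    exact measureReal_le_one
  exact (le_ciSup₂ hbdd Θ hΘH).trans hx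

end SublevelMeasure

/-- the test rejecting "Θ ∈ H" when `Π̄_{x^n}(H) ≤ α` controls the
frequentist Type I error at level `α`: if `Θ ∈ H` then
`P_Θ^n{ x^n : Π̄_{x^n}(H) ≤ α } ≤ α` for every `α ∈ [0,1]`. -/
theorem im_test_typeI_error {𝕏 𝕋 : Type*} [MeasurableSpace 𝕏]
    (μ : Measure 𝕏) [SigmaFinite μ]
    (P : 𝕋 → Measure 𝕏) [∀ θ, IsProbabilityMeasure (P θ)]
    (p : 𝕋 → 𝕏 → ℝ)
    (hdensity : ∀ θ, P θ = μ.withDensity fun x => ENNReal.ofReal (p θ x))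
    (hsup_pos : ∀ (m : ℕ) (xn : Fin m → 𝕏), 0 < ⨆ ϑ, likelihood p xn ϑ)
    (hsup_fin : ∀ (m : ℕ) (xn : Fin m → 𝕏),
      BddAbove (Set.range fun ϑ => likelihood p xn ϑ))
    (hmeas : ∀ (m : ℕ) (θ : 𝕋), Measurable fun xn : Fin m → 𝕏 => relLik p xn θ)
    (H : Set 𝕋) (Θ : 𝕋) (hΘH : Θ ∈ H)
    (n : ℕ) (α : ℝ) (hα0 : 0 ≤ α) (hα1 : α ≤ 1) :
    (Measure.pi fun _ : Fin n => P Θ) {xn | upperProb P p xn H ≤ α}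
      ≤ ENNReal.ofReal α :=
  im_test_typeI_error_general (fun θ => Measure.pi fun _ => P θ) (relLik p) hΘH α
end

section
/- The probability-to-possibility transform dominates the original probability: for every measurable set B ⊆ 𝕑, P(B) ≤ sup_{z ∈ B} π(z), i.e., the possibility measure Π̄(B) = sup_{z∈B} π(z) determined by the contour π satisfies Π̄(B) ≥ P(B), so P belongs to the credal set of Π̄. -/
open MeasureTheory

/-- Probability-to-possibility transform of `P` with density `p`:
`π(z) = P{ z' : p(z') ≤ p(z) }`. -/
noncomputable def probToPoss {𝕑 : Type*} [MeasurableSpace 𝕑]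
    (P : Measure 𝕑) (p : 𝕑 → ℝ) (z : 𝕑) : ℝ :=
  (P {w | p w ≤ p z}).toReal

/-!
The sublevel sets `{w | p w ≤ p z}`, `z ∈ B`, form a chain covering `B`. Countably many of them
already cover `B`: either `p` attains its maximum on `B`, or the rays `Iio (p z)` are an open cover
of `p(B)` and the Lindelöf property applies. Continuity of the measure along this countable chain
bounds `P B` by the supremum of their measures.
-/

theorem exists_countable_subset_isCofinalFor {β : Type*} [LinearOrder β] [TopologicalSpace β]
    [ClosedIciTopology β] [HereditarilyLindelofSpace β] (s : Set β) :
    ∃ t ⊆ s, t.Countable ∧ IsCofinalFor s t := by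
  by_cases hmax : ∃ m ∈ s, ∀ x ∈ s, x ≤ m
  · obtain ⟨m, hm, hle⟩ := hmax
    exact ⟨{m}, Set.singleton_subset_iff.2 hm, Set.countable_singleton m,
      fun x hx ↦ ⟨m, rfl, hle x hx⟩⟩
  · push Not at hmax
    have hcover : s ⊆ ⋃ y ∈ s, Set.Iio y := fun x hx ↦
      let ⟨_, hy, hxy⟩ := hmax x hx
      Set.mem_biUnion hy hxy
    obtain ⟨t, hts, htc, hst⟩ :=
      (HereditarilyLindelofSpace.isLindelof s).elim_countable_subcover_image
        (fun _ _ ↦ isOpen_Iio) hcover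
    refine ⟨t, hts, htc, fun x hx ↦ ?_⟩
    obtain ⟨y, hy, hxy⟩ := Set.mem_iUnion₂.1 (hst hx)
    exact ⟨y, hy, le_of_lt hxy⟩

theorem measure_le_iSup_measure_preimage_Iic {α β : Type*} [MeasurableSpace α] [LinearOrder β]
    [TopologicalSpace β] [ClosedIciTopology β] [HereditarilyLindelofSpace β]
    (μ : Measure α) (f : α → β) (s : Set α) :
    μ s ≤ ⨆ z ∈ s, μ (f ⁻¹' Set.Iic (f z)) := by
  obtain ⟨t, hts, htc, hcof⟩ := exists_countable_subset_isCofinalFor (f '' s)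
  have hcover : s ⊆ ⋃ y ∈ t, f ⁻¹' Set.Iic y := fun x hx ↦
    let ⟨_, hy, hxy⟩ := hcof (Set.mem_image_of_mem f hx)
    Set.mem_biUnion hy hxy
  have hdir : DirectedOn (Function.onFun (· ⊆ ·) fun y ↦ f ⁻¹' Set.Iic y) t :=
    (DirectedOn.of_linearOrder t).mono fun _ _ h ↦ Set.preimage_mono (Set.Iic_subset_Iic.2 h)
  calc
    μ s ≤ μ (⋃ y ∈ t, f ⁻¹' Set.Iic y) := measure_mono hcover
    _ = ⨆ y ∈ t, μ (f ⁻¹' Set.Iic y) := measure_biUnion_eq_iSup htc hdir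
    _ ≤ ⨆ y ∈ f '' s, μ (f ⁻¹' Set.Iic y) := biSup_mono hts
    _ = ⨆ z ∈ s, μ (f ⁻¹' Set.Iic (f z)) := iSup_image

-- For `i ∉ s` the inner supremum is `⊥ = 0` in `ℝ≥0∞` and the junk value `sSup ∅ = 0` in `ℝ`.
theorem toReal_biSup {ι : Type*} {s : Set ι} {f : ι → ENNReal} (hf : ∀ i ∈ s, f i ≠ ⊤) :
    (⨆ i ∈ s, f i).toReal = ⨆ i ∈ s, (f i).toReal := by
  have hne_top (i : ι) : ⨆ _ : i ∈ s, f i ≠ ⊤ := by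
    by_cases hi : i ∈ s <;> simp [hi, hf]
  rw [ENNReal.toReal_iSup hne_top]
  exact iSup_congr fun i ↦ ENNReal.toReal_iSup (hf i)

theorem probToPoss_dominates_general {α β : Type*} [MeasurableSpace α] [LinearOrder β]
    [TopologicalSpace β] [ClosedIciTopology β] [HereditarilyLindelofSpace β]
    (P : Measure α) [IsFiniteMeasure P] (f : α → β) (B : Set α) :
    P.real B ≤ ⨆ z ∈ B, P.real (f ⁻¹' Set.Iic (f z)) := by
  have hne_top : ⨆ z ∈ B, P (f ⁻¹' Set.Iic (f z)) ≠ ⊤ :=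
    ne_top_of_le_ne_top (measure_ne_top P Set.univ)
      (iSup₂_le fun _ _ ↦ measure_mono (Set.subset_univ _))
  calc
    P.real B ≤ (⨆ z ∈ B, P (f ⁻¹' Set.Iic (f z))).toReal :=
      ENNReal.toReal_mono hne_top (measure_le_iSup_measure_preimage_Iic P f B)
    _ = ⨆ z ∈ B, P.real (f ⁻¹' Set.Iic (f z)) := toReal_biSup fun _ _ ↦ measure_ne_top P _

/-- the probability-to-possibility transform dominates the original
probability: for every measurable `B`, `P(B) ≤ sup_{z ∈ B} π(z)`, i.e. `P` belongs
to the credal set of the possibility measure `Π̄(B) = sup_{z ∈ B} π(z)`. -/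
theorem probToPoss_dominates {𝕑 : Type*} [MeasurableSpace 𝕑]
    (μ : Measure 𝕑) [SigmaFinite μ]
    (P : Measure 𝕑) [IsProbabilityMeasure P]
    (p : 𝕑 → ℝ) (hp : Measurable p)
    (hdensity : P = μ.withDensity fun z => ENNReal.ofReal (p z))
    (B : Set 𝕑) (hB : MeasurableSet B) :
    (P B).toReal ≤ ⨆ z ∈ B, probToPoss P p z :=
  probToPoss_dominates_general P p B
end
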